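/- Let Φ be an irreducible reduced root system with base {α₁,...,α_ℓ}. For irreducible subsets I, J of the index set [ℓ], neither of type A, one has J ⊆ I if and only if θ_J ≤ θ_I in the dominant order, where θ_I denotes the highest short root of the root subsystem Φ_I generated by {α_i : i ∈ I}. -/

import Mathlib

open scoped RealInnerProductSpace

noncomputable section

variable {E : Type*} [NormedAddCommGroup E] [InnerProductSpace ℝ E]

/-- The pairing `⟨x, α∨⟩ = 2(x,α)/(α,α)`. -/
def cpair (x α : E) : ℝ := 2 * ⟪x, α⟫ / ⟪α, α⟫

/-- Reflection in the hyperplane orthogonal to `α`. -/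
def wrefl (α x : E) : E := x - cpair x α • α

/-- An irreducible reduced root system with a chosen base `simple : Fin ℓ → E`. -/
structure RootSystemData (ℓ : ℕ) (E : Type*) [NormedAddCommGroup E]
    [InnerProductSpace ℝ E] where
  roots : Finset E
  simple : Fin ℓ → E
  simple_mem : ∀ i, simple i ∈ roots
  root_ne_zero : ∀ α ∈ roots, α ≠ 0
  reduced : ∀ α ∈ roots, (2 : ℝ) • α ∉ roots
  cpair_int : ∀ α ∈ roots, ∀ β ∈ roots, ∃ n : ℤ, cpair β α = (n : ℝ)
  reflect_mem : ∀ α ∈ roots, ∀ β ∈ roots, wrefl α β ∈ roots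
  simple_indep : LinearIndependent ℝ simple
  root_decomp : ∀ α ∈ roots,
    (∃ c : Fin ℓ → ℕ, α = ∑ i, (c i : ℝ) • simple i) ∨
    (∃ c : Fin ℓ → ℕ, α = -∑ i, (c i : ℝ) • simple i)
  irred : ∀ S : Finset (Fin ℓ), S.Nonempty →
    (∀ i ∈ S, ∀ j ∉ S, ⟪simple i, simple j⟫ = 0) → S = Finset.univ

namespace RootSystemData

variable {ℓ : ℕ} (R : RootSystemData ℓ E)

/-- Integral weights. -/
def IsIntegral (x : E) : Prop := ∀ α ∈ R.roots, ∃ n : ℤ, cpair x α = (n : ℝ)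

/-- Dominant (integral) weights. -/
def IsDominant (x : E) : Prop :=
  R.IsIntegral x ∧ ∀ i, 0 ≤ cpair x (R.simple i)

/-- The dominant order: `R.wle μ λ` means `μ ≤ λ`, i.e. `λ - μ` is a nonnegative
integer combination of the simple roots. -/
def wle (μ lam : E) : Prop :=
  ∃ c : Fin ℓ → ℕ, lam - μ = ∑ i, (c i : ℝ) • R.simple i

/-- Minuscule weights: nonzero dominant weights all of whose pairings with roots
lie in `{0, 1, -1}`. -/
def IsMinuscule (x : E) : Prop :=
  R.IsDominant x ∧ x ≠ 0 ∧
  ∀ α ∈ R.roots, cpair x α = 0 ∨ cpair x α = 1 ∨ cpair x α = -1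

/-- `y` lies in the Weyl group orbit of `x`. -/
def InWeylOrbit (x y : E) : Prop :=
  ∃ l : List E, (∀ α ∈ l, α ∈ R.roots) ∧ y = l.foldr wrefl x

/-- `R.IsDualOf μ λ` expresses `μ = -w₀ λ`: `μ` is the dominant element of the
Weyl orbit of `-λ`. -/
def IsDualOf (μ lam : E) : Prop := R.IsDominant μ ∧ R.InWeylOrbit (-lam) μ

/-- Low triples of dominant weights. -/
def LowTriple (lam mu nu : E) : Prop :=
  R.IsDominant lam ∧ R.IsDominant mu ∧ R.IsDominant nu ∧
  (∀ lam' mu' : E, R.IsDominant lam' → R.IsDominant mu' →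
    R.wle lam' lam → R.wle mu' mu → R.wle nu (lam' + mu') → lam' = lam ∧ mu' = mu) ∧
  R.wle (nu + ∑ i, R.simple i) (lam + mu)

/-- Covering relation in the poset of dominant weights. -/
def Covers (lam mu : E) : Prop :=
  R.IsDominant lam ∧ R.IsDominant mu ∧ R.wle mu lam ∧ mu ≠ lam ∧
  ∀ η, R.IsDominant η → R.wle mu η → R.wle η lam → η = mu ∨ η = lam

/-- A root of the subsystem `Φ_I` generated by the simple roots indexed by `I`. -/
def IsRootOf (I : Finset (Fin ℓ)) (β : E) : Prop :=
  β ∈ R.roots ∧ ∃ c : Fin ℓ → ℤ, (∀ i, c i ≠ 0 → i ∈ I) ∧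
    β = ∑ i, (c i : ℝ) • R.simple i

/-- A short root of `Φ_I`. -/
def IsShortRootOf (I : Finset (Fin ℓ)) (β : E) : Prop :=
  R.IsRootOf I β ∧ ∀ γ, R.IsRootOf I γ → ⟪β, β⟫ ≤ ⟪γ, γ⟫

/-- `θ` is the highest short root of `Φ_I`. -/
def IsHighestShortRoot (I : Finset (Fin ℓ)) (θ : E) : Prop :=
  R.IsShortRootOf I θ ∧ ∀ γ, R.IsShortRootOf I γ → R.wle γ θ

/-- `I` indexes a connected (i.e. irreducible) subdiagram of the Dynkin diagram. -/
def Connected (I : Finset (Fin ℓ)) : Prop :=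
  I.Nonempty ∧ ∀ S ⊆ I, S.Nonempty →
    (∀ i ∈ S, ∀ j ∈ I, j ∉ S → ⟪R.simple i, R.simple j⟫ = 0) → S = I

/-- `I` is of type A: the Cartan matrix of `Φ_I` is that of a type `A` chain. -/
def IsTypeASub (I : Finset (Fin ℓ)) : Prop :=
  ∃ e : Fin I.card ≃ {i // i ∈ I}, ∀ a b : Fin I.card,
    cpair (R.simple (e b).1) (R.simple (e a).1) =
      if a = b then 2
      else if (a : ℕ) + 1 = (b : ℕ) ∨ (b : ℕ) + 1 = (a : ℕ) then -1 else 0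

/-- The subdiagram indexed by `I` is simply laced. -/
def SimplyLaced (I : Finset (Fin ℓ)) : Prop :=
  ∀ i ∈ I, ∀ j ∈ I, i ≠ j →
    cpair (R.simple i) (R.simple j) = 0 ∨ cpair (R.simple i) (R.simple j) = -1

end RootSystemData

section Reflections

lemma inner_wrefl_wrefl {α : E} (hα : α ≠ 0) (x : E) :
    ⟪wrefl α x, wrefl α x⟫ = ⟪x, x⟫ := by
  have h : ⟪α, α⟫ ≠ 0 := inner_self_ne_zero.2 hα
  simp only [wrefl, cpair, inner_sub_left, inner_sub_right, real_inner_smul_left,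
    real_inner_smul_right, real_inner_comm α x]
  field_simp
  ring

lemma cpair_self {α : E} (hα : α ≠ 0) : cpair α α = 2 := by
  have h : ⟪α, α⟫ ≠ 0 := inner_self_ne_zero.2 hα
  simp only [cpair]
  field_simp

lemma wrefl_self {α : E} (hα : α ≠ 0) : wrefl α α = -α := by
  rw [wrefl, cpair_self hα]
  module

lemma cpair_mul_inner_self {α : E} (hα : α ≠ 0) (x : E) : cpair x α * ⟪α, α⟫ = 2 * ⟪x, α⟫ :=
  div_mul_cancel₀ _ (inner_self_ne_zero.2 hα)

lemma inner_self_pos_of_ne_zero {α : E} (hα : α ≠ 0) : 0 < ⟪α, α⟫ :=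
  real_inner_self_pos.2 hα

lemma cpair_neg_iff {α : E} (hα : α ≠ 0) (x : E) : cpair x α < 0 ↔ ⟪x, α⟫ < 0 := by
  have h := inner_self_pos_of_ne_zero hα
  have e := cpair_mul_inner_self hα x
  constructor <;> intro H <;> nlinarith

lemma cpair_pos_iff {α : E} (hα : α ≠ 0) (x : E) : 0 < cpair x α ↔ 0 < ⟪x, α⟫ := by
  have h := inner_self_pos_of_ne_zero hα
  have e := cpair_mul_inner_self hα x
  constructor <;> intro H <;> nlinarith

end Reflections

namespace RootSystemData

variable {ℓ : ℕ} (R : RootSystemData ℓ E)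

/-- The vector with given coordinates with respect to the simple roots. -/
def comb : (Fin ℓ → ℝ) →ₗ[ℝ] E := Fintype.linearCombination ℝ R.simple

lemma comb_apply (c : Fin ℓ → ℝ) : R.comb c = ∑ i, c i • R.simple i :=
  Fintype.linearCombination_apply ℝ R.simple c

lemma comb_injective : Function.Injective R.comb :=
  R.simple_indep.fintypeLinearCombination_injective

lemma comb_single (i : Fin ℓ) (r : ℝ) : R.comb (Pi.single i r) = r • R.simple i := by
  simp [comb]

lemma inner_comb_left (c : Fin ℓ → ℝ) (x : E) :
    ⟪R.comb c, x⟫ = ∑ i, c i * ⟪R.simple i, x⟫ := by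
  rw [comb_apply, sum_inner]
  simp only [real_inner_smul_left]

lemma simple_ne_zero (i : Fin ℓ) : R.simple i ≠ 0 :=
  R.root_ne_zero _ (R.simple_mem i)

lemma neg_mem {α : E} (hα : α ∈ R.roots) : -α ∈ R.roots := by
  have h := R.reflect_mem α hα α hα
  rwa [wrefl_self (R.root_ne_zero α hα)] at h

/-- The coordinates of a root all have the same sign. -/
lemma coord_sign {c : Fin ℓ → ℝ} (h : R.comb c ∈ R.roots) :
    (∃ d : Fin ℓ → ℕ, c = fun i => (d i : ℝ)) ∨
      (∃ d : Fin ℓ → ℕ, c = fun i => -(d i : ℝ)) := by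
  rcases R.root_decomp _ h with ⟨d, hd⟩ | ⟨d, hd⟩
  · refine Or.inl ⟨d, R.comb_injective ?_⟩
    rw [hd, comb_apply]
  · refine Or.inr ⟨d, R.comb_injective ?_⟩
    rw [hd, comb_apply, ← Finset.sum_neg_distrib]
    simp only [neg_smul]

lemma wrefl_simple_comb (i : Fin ℓ) (c : Fin ℓ → ℝ) :
    wrefl (R.simple i) (R.comb c) =
      R.comb (c - Pi.single i (cpair (R.comb c) (R.simple i))) := by
  rw [map_sub, comb_single, wrefl]

lemma inner_simple_nonpos {i j : Fin ℓ} (hij : i ≠ j) :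
    ⟪R.simple i, R.simple j⟫ ≤ 0 := by
  by_contra! h
  have hpos := (cpair_pos_iff (R.simple_ne_zero j) _).2 h
  have hmem := R.reflect_mem _ (R.simple_mem j) _ (R.simple_mem i)
  have e : R.simple i = R.comb (Pi.single i 1) := by simp [comb_single]
  rw [e, wrefl_simple_comb, ← e] at hmem
  rcases R.coord_sign hmem with ⟨d, hd⟩ | ⟨d, hd⟩
  · have := congrFun hd j
    simp [hij.symm] at this
    have h0 : (0 : ℝ) ≤ d j := Nat.cast_nonneg _
    linarith
  · have := congrFun hd i
    simp [hij] at this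
    have h0 : (0 : ℝ) ≤ d i := Nat.cast_nonneg _
    linarith

/-- A vector with nonnegative coordinates supported on `S` pairs nonpositively with a simple
root outside `S`. -/
lemma inner_comb_simple_nonpos {c : Fin ℓ → ℝ} (hc : ∀ i, 0 ≤ c i) {j : Fin ℓ} (hj : c j = 0) :
    ⟪R.comb c, R.simple j⟫ ≤ 0 := by
  rw [inner_comb_left]
  refine Finset.sum_nonpos fun i _ => ?_
  rcases eq_or_ne i j with rfl | h
  · simp [hj]
  · exact mul_nonpos_of_nonneg_of_nonpos (hc i) (R.inner_simple_nonpos h)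

lemma inner_comb_simple_neg {c : Fin ℓ → ℝ} (hc : ∀ i, 0 ≤ c i) {i j : Fin ℓ} (hj : c j = 0)
    (hi : c i ≠ 0) (hij : ⟪R.simple i, R.simple j⟫ ≠ 0) :
    ⟪R.comb c, R.simple j⟫ < 0 := by
  rw [inner_comb_left]
  refine Finset.sum_neg' (fun k _ => ?_) ⟨i, Finset.mem_univ _, ?_⟩
  · rcases eq_or_ne k j with rfl | h
    · simp [hj]
    · exact mul_nonpos_of_nonneg_of_nonpos (hc k) (R.inner_simple_nonpos h)
  · have hne : i ≠ j := fun h => hi (h ▸ hj)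
    exact mul_neg_of_pos_of_neg (lt_of_le_of_ne (hc i) (Ne.symm hi))
      (lt_of_le_of_ne (R.inner_simple_nonpos hne) hij)

/-- Two roots of different lengths at an obtuse angle. -/
lemma cpair_eq_neg_one_of_lt {α β : E} (hα : α ∈ R.roots) (hβ : β ∈ R.roots)
    (hneg : ⟪α, β⟫ < 0) (hlt : ⟪α, α⟫ < ⟪β, β⟫) :
    cpair α β = -1 ∧ 2 * ⟪α, α⟫ ≤ ⟪β, β⟫ ∧ ⟪β, β⟫ ≤ 3 * ⟪α, α⟫ := by
  have hα0 := R.root_ne_zero α hα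
  have hβ0 := R.root_ne_zero β hβ
  obtain ⟨a, ha⟩ := R.cpair_int β hβ α hα
  obtain ⟨b, hb⟩ := R.cpair_int α hα β hβ
  have ea := cpair_mul_inner_self hβ0 α
  have eb := cpair_mul_inner_self hα0 β
  rw [real_inner_comm α β] at eb
  have pα := inner_self_pos_of_ne_zero hα0
  have pβ := inner_self_pos_of_ne_zero hβ0
  have na := (cpair_neg_iff hβ0 α).2 hneg
  have nb := (cpair_neg_iff hα0 β).2 (by rwa [real_inner_comm])
  rw [ha] at ea na ⊢
  rw [hb] at eb nb
  have hab : (b : ℝ) < a := by nlinarith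
  have hcs := real_inner_mul_inner_self_le α β
  have hprod : (a : ℝ) * b ≤ 4 := by
    have h1 : ((a : ℝ) * b) * (⟪α, α⟫ * ⟪β, β⟫) ≤ 4 * (⟪α, α⟫ * ⟪β, β⟫) := by
      have : ((a : ℝ) * b) * (⟪α, α⟫ * ⟪β, β⟫) = 4 * (⟪α, β⟫ * ⟪α, β⟫) := by
        linear_combination (b * ⟪α, α⟫) * ea + (2 * ⟪α, β⟫) * eb
      linarith
    exact le_of_mul_le_mul_right h1 (mul_pos pα pβ)
  have na' : a < 0 := by exact_mod_cast na
  have hab' : b < a := by exact_mod_cast hab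
  have hprod' : a * b ≤ 4 := by exact_mod_cast hprod
  have ha1 : a = -1 := by
    by_contra hne
    have : a ≤ -2 := by omega
    nlinarith
  subst ha1
  have hb4 : -4 ≤ b := by linarith
  have hb4' : b ≠ -4 := by
    rintro rfl
    push_cast at ea eb
    have hz : ⟪β + (2 : ℝ) • α, β + (2 : ℝ) • α⟫ = 0 := by
      simp only [inner_add_left, inner_add_right, real_inner_smul_left, real_inner_smul_right,
        real_inner_comm α β]
      linarith
    have h2 : (2 : ℝ) • α = -β := by
      rw [eq_neg_iff_add_eq_zero, add_comm]
      exact inner_self_eq_zero.1 hz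
    exact R.reduced α hα (h2 ▸ R.neg_mem hβ)
  have hb : b = -2 ∨ b = -3 := by omega
  refine ⟨by norm_num, ?_⟩
  push_cast at ea
  rcases hb with rfl | rfl <;> push_cast at eb <;> constructor <;> linarith

/-- A positive root proportional to a simple root is that simple root. -/
lemma eq_one_of_smul_simple_mem {i : Fin ℓ} {m : ℕ}
    (h : (m : ℝ) • R.simple i ∈ R.roots) : m = 1 := by
  have hm : (m : ℝ) ≠ 0 := fun h0 => R.root_ne_zero _ h (by simp [h0])
  have hs := inner_self_pos_of_ne_zero (R.simple_ne_zero i)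
  obtain ⟨n, hn⟩ := R.cpair_int _ h _ (R.simple_mem i)
  have e := cpair_mul_inner_self (R.root_ne_zero _ h) (R.simple i)
  rw [hn] at e
  simp only [real_inner_smul_left, real_inner_smul_right] at e
  have hnm : (n : ℝ) * m = 2 := by
    have : (n * m - 2 : ℝ) * (m * ⟪R.simple i, R.simple i⟫) = 0 := by linear_combination e
    rcases mul_eq_zero.1 this with h | h
    · linarith
    · exact absurd h (mul_ne_zero hm hs.ne')
  have hnm' : n * m = 2 := by exact_mod_cast hnm
  have hdvd : m ∣ 2 := by
    have : (m : ℤ) ∣ 2 := ⟨n, by linarith⟩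
    exact_mod_cast this
  rcases (Nat.dvd_prime Nat.prime_two).1 hdvd with h1 | rfl
  · exact h1
  · exact absurd (by simpa using h) (R.reduced _ (R.simple_mem i))

/-- Every positive root has the length of a simple root in its support. -/
lemma exists_simple_inner_self_eq (n : ℕ) : ∀ c : Fin ℓ → ℕ, ∑ i, c i = n →
    R.comb (fun i => (c i : ℝ)) ∈ R.roots →
    ∃ k, c k ≠ 0 ∧ ⟪R.simple k, R.simple k⟫ =
      ⟪R.comb (fun i => (c i : ℝ)), R.comb (fun i => (c i : ℝ))⟫ := by
  induction n using Nat.strong_induction_on with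
  | _ n ih =>
    intro c hcn hroot
    set β := R.comb (fun i => (c i : ℝ)) with hβ
    have hβpos := inner_self_pos_of_ne_zero (R.root_ne_zero _ hroot)
    obtain ⟨i, hi⟩ : ∃ i, 0 < (c i : ℝ) * ⟪R.simple i, β⟫ := by
      by_contra! hcon
      have : ⟪β, β⟫ ≤ 0 := by
        conv_lhs => rw [hβ, inner_comb_left]
        exact Finset.sum_nonpos fun i _ => hcon i
      linarith
    have hci : c i ≠ 0 := by
      rintro h0
      simp [h0] at hi
    have hip : 0 < ⟪β, R.simple i⟫ := by
      rw [real_inner_comm]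
      exact pos_of_mul_pos_right hi (Nat.cast_nonneg _)
    have hcp := (cpair_pos_iff (R.simple_ne_zero i) β).2 hip
    have hmem := R.reflect_mem _ (R.simple_mem i) _ hroot
    have hnorm := inner_wrefl_wrefl (R.simple_ne_zero i) β
    rw [hβ, wrefl_simple_comb, ← hβ] at hmem hnorm
    rcases R.coord_sign hmem with ⟨d, hd⟩ | ⟨d, hd⟩
    · rw [hd] at hmem hnorm
      have hdc : ∀ j, d j ≤ c j := by
        intro j
        have := congrFun hd j
        rcases eq_or_ne j i with rfl | hj
        · simp at this
          exact_mod_cast (by linarith : (d j : ℝ) ≤ c j)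
        · simp [hj] at this
          exact this.ge
      have hdi : d i < c i := by
        have := congrFun hd i
        simp at this
        exact_mod_cast (by linarith : (d i : ℝ) < c i)
      have hlt : ∑ j, d j < n :=
        hcn ▸ Finset.sum_lt_sum (fun j _ => hdc j) ⟨i, Finset.mem_univ _, hdi⟩
      obtain ⟨k, hk, hk'⟩ := ih _ hlt d rfl hmem
      exact ⟨k, fun h0 => hk (by have := hdc k; omega), hk'.trans hnorm⟩
    · have hc0 : ∀ j, j ≠ i → c j = 0 := by
        intro j hj
        have := congrFun hd j
        simp only [Pi.sub_apply, Pi.single_eq_of_ne hj, sub_zero] at this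
        have h1 : (0 : ℝ) ≤ d j := Nat.cast_nonneg _
        have h2 : (0 : ℝ) ≤ c j := Nat.cast_nonneg _
        exact_mod_cast (by linarith : (c j : ℝ) = 0)
      have hs : β = (c i : ℝ) • R.simple i := by
        rw [hβ, ← comb_single]
        congr 1
        ext j
        rcases eq_or_ne j i with rfl | hj
        · simp
        · simp [hj, hc0 j hj]
      have h1 := R.eq_one_of_smul_simple_mem (hs ▸ hroot)
      refine ⟨i, hci, ?_⟩
      rw [hs, h1]
      simp

/-- The highest short root of `Φ_I` is a positive root supported on `I`. -/
lemma IsHighestShortRoot.exists_coord {R : RootSystemData ℓ E} {I : Finset (Fin ℓ)} {θ : E}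
    (h : R.IsHighestShortRoot I θ) :
    ∃ c : Fin ℓ → ℕ, (∀ i, c i ≠ 0 → i ∈ I) ∧ θ = R.comb (fun i => (c i : ℝ)) := by
  obtain ⟨⟨⟨hroot, c, hcI, hc⟩, hmin⟩, hmax⟩ := h
  have hc' : θ = R.comb (fun i => (c i : ℝ)) := by rw [hc, comb_apply]
  have hneg : R.IsShortRootOf I (-θ) := by
    refine ⟨⟨R.neg_mem hroot, fun i => -c i, fun i hi => hcI i (by simpa using hi), ?_⟩, ?_⟩
    · rw [hc, ← Finset.sum_neg_distrib]
      simp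
    · simpa using hmin
  obtain ⟨d, hd⟩ := hmax _ hneg
  rw [← comb_apply R (fun i => (d i : ℝ)), hc', ← map_neg, ← map_sub] at hd
  have hd' := R.comb_injective hd
  have hnn : ∀ i, 0 ≤ c i := by
    intro i
    have := congrFun hd' i
    simp at this
    have h0 : (0 : ℝ) ≤ d i := Nat.cast_nonneg _
    exact_mod_cast (by linarith : (0 : ℝ) ≤ c i)
  refine ⟨fun i => (c i).toNat, fun i hi => hcI i (fun h0 => hi (by simp [h0])), ?_⟩
  rw [hc']
  congr 1
  ext i
  have := Int.toNat_of_nonneg (hnn i)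
  exact_mod_cast this.symm

/-- The highest short root of an irreducible `Φ_I` has full support. -/
lemma IsHighestShortRoot.coord_ne_zero {R : RootSystemData ℓ E} {I : Finset (Fin ℓ)}
    (hI : R.Connected I) {c : Fin ℓ → ℕ} (hcI : ∀ i, c i ≠ 0 → i ∈ I)
    (h : R.IsHighestShortRoot I (R.comb (fun i => (c i : ℝ)))) {i : Fin ℓ} (hi : i ∈ I) :
    c i ≠ 0 := by
  obtain ⟨⟨⟨hroot, -⟩, hmin⟩, hmax⟩ := h
  have hS : I.filter (fun i => c i ≠ 0) = I := by
    refine hI.2 _ (Finset.filter_subset _ _) ?_ ?_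
    · by_contra hcon
      rw [Finset.not_nonempty_iff_eq_empty, Finset.filter_eq_empty_iff] at hcon
      have hz : (fun i => (c i : ℝ)) = 0 := by
        ext i
        by_cases hi : i ∈ I
        · simpa using hcon hi
        · have := mt (hcI i) hi
          simpa using this
      exact R.root_ne_zero _ hroot (by rw [hz, map_zero])
    · intro i hi j hj hjS
      by_contra hne
      simp only [Finset.mem_filter, not_and, not_not] at hi hjS
      have hcj := hjS hj
      have hc0 : ∀ i, (0 : ℝ) ≤ c i := fun i => Nat.cast_nonneg _
      have hcj' : (c j : ℝ) = 0 := by rw [hcj, Nat.cast_zero]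
      have hci : (c i : ℝ) ≠ 0 := Nat.cast_ne_zero.2 hi.2
      have hlt := R.inner_comb_simple_neg hc0 hcj' hci hne
      have hlt' := (cpair_neg_iff (R.simple_ne_zero j) _).2 hlt
      obtain ⟨n, hn⟩ := R.cpair_int _ (R.simple_mem j) _ hroot
      have hmem := R.reflect_mem _ (R.simple_mem j) _ hroot
      have hnorm := inner_wrefl_wrefl (R.simple_ne_zero j) (R.comb (fun i => (c i : ℝ)))
      rw [wrefl_simple_comb, hn] at hmem hnorm
      have hmin' := fun γ hγ => hnorm.trans_le (hmin γ hγ)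
      have hroot' : R.IsRootOf I
          (R.comb ((fun i => (c i : ℝ)) - Pi.single j (n : ℝ))) := by
        refine ⟨hmem, fun i => (c i : ℤ) - (Pi.single j n : Fin ℓ → ℤ) i, fun k hk => ?_, ?_⟩
        · rcases eq_or_ne k j with rfl | hkj
          · exact hj
          · simp [hkj] at hk
            exact hcI k hk
        · rw [comb_apply]
          refine Finset.sum_congr rfl fun k _ => ?_
          rcases eq_or_ne k j with rfl | hkj
          · simp
          · simp [hkj]
      obtain ⟨d, hd⟩ := hmax _ ⟨hroot', hmin'⟩
      rw [← comb_apply R (fun i => (d i : ℝ)), ← map_sub] at hd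
      have := congrFun (R.comb_injective hd) j
      simp at this
      have h0 : (0 : ℝ) ≤ d j := Nat.cast_nonneg _
      linarith
  rw [← hS] at hi
  exact (Finset.mem_filter.1 hi).2

/-- A simple root of `Φ_I` outside `J` can be reflected, without touching `J`, to a root that is
not orthogonal to `J`. -/
lemma exists_root_not_orthogonal {I J : Finset (Fin ℓ)} (hI : R.Connected I) (hJ : J.Nonempty)
    (hJI : J ⊆ I) {k : Fin ℓ} (hkI : k ∈ I) (hkJ : k ∉ J) :
    ∃ c : Fin ℓ → ℝ, (∀ i, 0 ≤ c i) ∧ (∀ i ∈ J, c i = 0) ∧ R.comb c ∈ R.roots ∧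
      ⟪R.comb c, R.comb c⟫ = ⟪R.simple k, R.simple k⟫ ∧
      ∃ j ∈ J, ⟪R.comb c, R.simple j⟫ ≠ 0 := by
  classical
  let P : Finset (Fin ℓ) → Prop := fun S => S.Nonempty ∧ ∃ c : Fin ℓ → ℝ, (∀ i, 0 ≤ c i) ∧
    (∀ i, c i ≠ 0 ↔ i ∈ S) ∧ R.comb c ∈ R.roots ∧
      ⟪R.comb c, R.comb c⟫ = ⟪R.simple k, R.simple k⟫
  have hne : ((I \ J).powerset.filter P).Nonempty := by
    refine ⟨{k}, Finset.mem_filter.2 ⟨by simp [hkI, hkJ], by simp, Pi.single k 1, ?_, ?_, ?_, ?_⟩⟩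
    · intro i
      rcases eq_or_ne i k with rfl | h
      · simp
      · simp [h]
    · intro i
      rcases eq_or_ne i k with rfl | h
      · simp
      · simp [h]
    · simpa [comb_single] using R.simple_mem k
    · simp [comb_single]
  obtain ⟨S, hS, hSmax⟩ := Finset.exists_max_image _ Finset.card hne
  obtain ⟨hSsub, hSne, c, hc0, hcS, hroot, hnorm⟩ := Finset.mem_filter.1 hS
  rw [Finset.mem_powerset] at hSsub
  have hSI : S ⊆ I := hSsub.trans Finset.sdiff_subset
  have hSneI : S ≠ I := by
    rintro rfl
    obtain ⟨j, hj⟩ := hJ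
    exact (Finset.mem_sdiff.1 (hSsub (hJI hj))).2 hj
  have hex : ∃ i ∈ S, ∃ j ∈ I, j ∉ S ∧ ⟪R.simple i, R.simple j⟫ ≠ 0 := by
    by_contra! hcon
    exact hSneI (hI.2 S hSI hSne hcon)
  obtain ⟨i, hiS, j, hjI, hjS, hij⟩ := hex
  have hcj : c j = 0 := by simpa using mt (hcS j).1 hjS
  have hneg := R.inner_comb_simple_neg hc0 hcj ((hcS i).2 hiS) hij
  by_cases hjJ : j ∈ J
  · refine ⟨c, hc0, fun i hi => ?_, hroot, hnorm, j, hjJ, hneg.ne⟩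
    have : i ∉ S := fun h => (Finset.mem_sdiff.1 (hSsub h)).2 hi
    simpa using mt (hcS i).1 this
  · exfalso
    have hneg' := (cpair_neg_iff (R.simple_ne_zero j) _).2 hneg
    have hmem := R.reflect_mem _ (R.simple_mem j) _ hroot
    have hn := inner_wrefl_wrefl (R.simple_ne_zero j) (R.comb c)
    rw [wrefl_simple_comb] at hmem hn
    have hle := hSmax (insert j S) (Finset.mem_filter.2 ⟨?_, ?_, _, ?_, ?_, hmem, hn.trans hnorm⟩)
    · rw [Finset.card_insert_of_notMem hjS] at hle
      omega
    · rw [Finset.mem_powerset]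
      exact Finset.insert_subset (Finset.mem_sdiff.2 ⟨hjI, hjJ⟩) hSsub
    · exact Finset.insert_nonempty _ _
    · intro m
      rcases eq_or_ne m j with rfl | h
      · simp [hcj, hneg'.le]
      · simp [h, hc0 m]
    · intro m
      rcases eq_or_ne m j with rfl | h
      · simp [hcj, hneg'.ne]
      · simp [h, ← hcS m]

/-- A root `w` supported off `J` and shorter than all simple roots in `J` is linked to at most one
of them. -/
lemma eq_of_not_orthogonal {J : Finset (Fin ℓ)} {c : Fin ℓ → ℝ} (hcJ : ∀ i ∈ J, c i = 0)
    (hc0 : ∀ i, 0 ≤ c i) (hroot : R.comb c ∈ R.roots)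
    (hlt : ∀ j ∈ J, ⟪R.comb c, R.comb c⟫ < ⟪R.simple j, R.simple j⟫) {x y : Fin ℓ}
    (hx : x ∈ J) (hy : y ∈ J) (hwx : ⟪R.comb c, R.simple x⟫ ≠ 0)
    (hwy : ⟪R.comb c, R.simple y⟫ ≠ 0) : x = y := by
  by_contra hxy
  have key : ∀ z ∈ J, ⟪R.comb c, R.simple z⟫ ≠ 0 →
      2 * ⟪R.comb c, R.simple z⟫ = -⟪R.simple z, R.simple z⟫ ∧
      2 * ⟪R.comb c, R.comb c⟫ ≤ ⟪R.simple z, R.simple z⟫ := by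
    intro z hz hwz
    have h := R.cpair_eq_neg_one_of_lt hroot (R.simple_mem z)
      (lt_of_le_of_ne (R.inner_comb_simple_nonpos hc0 (hcJ z hz)) hwz) (hlt z hz)
    have e := cpair_mul_inner_self (R.simple_ne_zero z) (R.comb c)
    rw [h.1] at e
    exact ⟨by linarith, h.2.1⟩
  obtain ⟨hx1, hx2⟩ := key x hx hwx
  obtain ⟨hy1, hy2⟩ := key y hy hwy
  have hxy' := R.inner_simple_nonpos hxy
  have hz : R.simple x + R.simple y + (2 : ℝ) • R.comb c ≠ 0 := by
    have e : R.simple x + R.simple y + (2 : ℝ) • R.comb c =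
        R.comb (Pi.single x 1 + Pi.single y 1 + (2 : ℝ) • c) := by
      simp [comb_single]
    rw [e]
    intro h0
    have := congrFun (R.comb_injective (h0.trans (map_zero R.comb).symm)) x
    simp [hxy, hcJ x hx] at this
  have hpos := inner_self_pos_of_ne_zero hz
  simp only [inner_add_left, inner_add_right, real_inner_smul_left, real_inner_smul_right] at hpos
  rw [real_inner_comm (R.simple x) (R.simple y), real_inner_comm (R.comb c) (R.simple x),
    real_inner_comm (R.comb c) (R.simple y)] at hpos
  linarith

/-- Simple roots linked to a strictly shorter root outside of their span form a chain. -/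
lemma exists_chain (n : ℕ) : ∀ (J : Finset (Fin ℓ)) (c : Fin ℓ → ℝ), J.card = n →
    (∀ i, 0 ≤ c i) → (∀ i ∈ J, c i = 0) → R.comb c ∈ R.roots →
    (∀ j ∈ J, ⟪R.comb c, R.comb c⟫ < ⟪R.simple j, R.simple j⟫) →
    (∀ S ⊆ J, S.Nonempty → ∃ s ∈ S, ⟪R.comb c, R.simple s⟫ ≠ 0 ∨
      ∃ j ∈ J, j ∉ S ∧ ⟪R.simple s, R.simple j⟫ ≠ 0) →
    ∃ f : ℕ → Fin ℓ, (∀ a < n, f a ∈ J) ∧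
      (∀ a < n, ⟪R.comb c, R.simple (f a)⟫ ≠ 0 ↔ a = 0) ∧
      ∀ a < n, ∀ b < n, a < b →
        (b = a + 1 → cpair (R.simple (f a)) (R.simple (f b)) = -1 ∧
          cpair (R.simple (f b)) (R.simple (f a)) = -1) ∧
        (b ≠ a + 1 → ⟪R.simple (f a), R.simple (f b)⟫ = 0) := by
  induction n with
  | zero =>
    intro J c _ _ _ hroot _ _
    obtain ⟨i⟩ : Nonempty (Fin ℓ) := by
      by_contra h
      rw [not_nonempty_iff] at h
      exact R.root_ne_zero _ hroot (by rw [Subsingleton.elim c 0, map_zero])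
    exact ⟨fun _ => i, by simp, by simp, by simp⟩
  | succ n ih =>
    intro J c hJ hc0 hcJ hroot hlt hconn
    have hJne : J.Nonempty := by
      rw [← Finset.card_pos]
      omega
    obtain ⟨x, hxJ, hwx⟩ : ∃ x ∈ J, ⟪R.comb c, R.simple x⟫ ≠ 0 := by
      obtain ⟨s, hs, h | ⟨j, hj, hj', -⟩⟩ := hconn J subset_rfl hJne
      · exact ⟨s, hs, h⟩
      · exact absurd hj hj'
    have hwx' := lt_of_le_of_ne (R.inner_comb_simple_nonpos hc0 (hcJ x hxJ)) hwx
    obtain ⟨hp, hx2, -⟩ := R.cpair_eq_neg_one_of_lt hroot (R.simple_mem x) hwx' (hlt x hxJ)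
    have huniq : ∀ y ∈ J, y ≠ x → ⟪R.comb c, R.simple y⟫ = 0 := by
      intro y hy hyx
      by_contra h
      exact hyx (R.eq_of_not_orthogonal hcJ hc0 hroot hlt hy hxJ h hwx)
    have hmem := R.reflect_mem _ (R.simple_mem x) _ hroot
    have hnorm := inner_wrefl_wrefl (R.simple_ne_zero x) (R.comb c)
    rw [wrefl_simple_comb, hp] at hmem hnorm
    set c' : Fin ℓ → ℝ := c - Pi.single x (-1) with hc'
    have hw' : R.comb c' = R.comb c + R.simple x := by
      rw [hc', map_sub, comb_single]
      module
    have hinner : ∀ y ∈ J.erase x, ⟪R.comb c', R.simple y⟫ = ⟪R.simple x, R.simple y⟫ := by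
      intro y hy
      rw [Finset.mem_erase] at hy
      rw [hw', inner_add_left, huniq y hy.2 hy.1, zero_add]
    have hc'0 : ∀ i, 0 ≤ c' i := by
      intro i
      rcases eq_or_ne i x with rfl | h
      · simp [hc', hcJ i hxJ]
      · simp [hc', h, hc0 i]
    have hc'J : ∀ i ∈ J.erase x, c' i = 0 := by
      intro i hi
      rw [Finset.mem_erase] at hi
      simp [hc', hi.1, hcJ i hi.2]
    have hlt' : ∀ j ∈ J.erase x, ⟪R.comb c', R.comb c'⟫ < ⟪R.simple j, R.simple j⟫ :=
      fun j hj => hnorm ▸ hlt j (Finset.mem_of_mem_erase hj)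
    obtain ⟨f, hfJ, hf0, hf⟩ := ih (J.erase x) c' (by rw [Finset.card_erase_of_mem hxJ]; omega)
      hc'0 hc'J hmem hlt' (by
        intro S hS hSne
        obtain ⟨s, hs, h | ⟨j, hj, hj', h⟩⟩ := hconn S (hS.trans (Finset.erase_subset _ _)) hSne
        · have hs' := Finset.mem_erase.1 (hS hs)
          exact absurd (huniq s hs'.2 hs'.1) h
        · refine ⟨s, hs, ?_⟩
          rcases eq_or_ne j x with rfl | hjx
          · left
            rw [hinner s (hS hs), real_inner_comm]
            exact h
          · exact Or.inr ⟨j, Finset.mem_erase.2 ⟨hjx, hj⟩, hj', h⟩)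
    refine ⟨fun a => Nat.casesOn a x f, ?_, ?_, ?_⟩
    · rintro (_ | a) ha
      · exact hxJ
      · exact Finset.mem_of_mem_erase (hfJ a (by omega))
    · rintro (_ | a) ha
      · simpa using hwx
      · have := Finset.mem_erase.1 (hfJ a (by omega))
        simp [huniq _ this.2 this.1]
    · rintro (_ | a) ha (_ | b) hb hab
      · omega
      · have hbn : b < n := by omega
        have hfb := hfJ b hbn
        have hxb := hinner _ hfb
        constructor
        · intro hb1
          obtain rfl : b = 0 := by omega
          have hne := (hf0 0 hbn).2 rfl
          have hneg := lt_of_le_of_ne (R.inner_comb_simple_nonpos hc'0 (hc'J _ hfb)) hne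
          obtain ⟨hq, -, hq3⟩ :=
            R.cpair_eq_neg_one_of_lt hmem (R.simple_mem _) hneg (hlt' _ hfb)
          have hxy : cpair (R.simple x) (R.simple (f 0)) = -1 := by
            rw [cpair, ← hxb]
            exact hq
          refine ⟨hxy, ?_⟩
          obtain ⟨m, hm⟩ := R.cpair_int _ (R.simple_mem x) _ (R.simple_mem (f 0))
          have e1 := cpair_mul_inner_self (R.simple_ne_zero (f 0)) (R.simple x)
          have e2 := cpair_mul_inner_self (R.simple_ne_zero x) (R.simple (f 0))
          rw [hxy] at e1
          rw [hm, real_inner_comm (R.simple x) (R.simple (f 0))] at e2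
          rw [hnorm] at hq3
          have hxpos := inner_self_pos_of_ne_zero (R.simple_ne_zero x)
          have hypos := inner_self_pos_of_ne_zero (R.simple_ne_zero (f 0))
          have hm0 : (m : ℝ) < 0 := by nlinarith
          have hm2 : (-2 : ℝ) < m := by nlinarith
          have hm0' : m < 0 := by exact_mod_cast hm0
          have hm2' : -2 < m := by exact_mod_cast hm2
          obtain rfl : m = -1 := by omega
          change cpair (R.simple (f 0)) (R.simple x) = -1
          rw [hm]
          norm_num
        · intro hb1
          have : ¬ b = 0 := by omega
          have h0 := mt (hf0 b hbn).1 this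
          rw [not_not, hxb] at h0
          exact h0
      · omega
      · have := hf a (by omega) b (by omega) (by omega)
        exact ⟨fun h => this.1 (by omega), fun h => this.2 (by omega)⟩

/-- An irreducible subdiagram `J` all of whose simple roots are longer than some simple root of an
irreducible subdiagram containing it is of type A. -/
lemma isTypeASub_of_lt {I J : Finset (Fin ℓ)} (hI : R.Connected I) (hJ : R.Connected J)
    (hJI : J ⊆ I) {k : Fin ℓ} (hkI : k ∈ I)
    (hlt : ∀ j ∈ J, ⟪R.simple k, R.simple k⟫ < ⟪R.simple j, R.simple j⟫) :
    R.IsTypeASub J := by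
  have hkJ : k ∉ J := fun h => lt_irrefl _ (hlt k h)
  obtain ⟨c, hc0, hcJ, hroot, hnorm, j₀, hj₀, hwj⟩ :=
    R.exists_root_not_orthogonal hI hJ.1 hJI hkI hkJ
  obtain ⟨f, hfJ, -, hf⟩ := R.exists_chain J.card J c rfl hc0 hcJ hroot
    (fun j hj => hnorm ▸ hlt j hj) (by
      intro S hS hSne
      by_cases hSJ : S = J
      · exact ⟨j₀, hSJ ▸ hj₀, Or.inl hwj⟩
      · by_contra! hcon
        exact hSJ (hJ.2 S hS hSne fun i hi j hj hj' => (hcon i hi).2 j hj hj'))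
  have hcp : ∀ a b : Fin J.card, cpair (R.simple (f b)) (R.simple (f a)) =
      if a = b then 2
      else if (a : ℕ) + 1 = (b : ℕ) ∨ (b : ℕ) + 1 = (a : ℕ) then -1 else 0 := by
    intro a b
    rcases lt_trichotomy (a : ℕ) b with h | h | h
    · have hab := hf a a.2 b b.2 h
      rw [if_neg (Fin.ne_of_val_ne h.ne)]
      split_ifs with h1
      · exact (hab.1 (by omega)).2
      · rw [cpair, real_inner_comm, hab.2 (by omega)]
        simp
    · obtain rfl := Fin.ext h
      simp [cpair_self (R.simple_ne_zero _)]
    · have hab := hf b b.2 a a.2 h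
      rw [if_neg (Fin.ne_of_val_ne h.ne')]
      split_ifs with h1
      · exact (hab.1 (by omega)).1
      · rw [cpair, hab.2 (by omega)]
        simp
  have hinj : Function.Injective (fun a : Fin J.card => (⟨f a, hfJ a a.2⟩ : {i // i ∈ J})) := by
    intro a b hab
    have hab' : f a = f b := congrArg Subtype.val hab
    by_contra hne
    have := hcp a b
    rw [hab', cpair_self (R.simple_ne_zero _), if_neg hne] at this
    split_ifs at this <;> norm_num at this
  exact ⟨Equiv.ofBijective _ ((Fintype.bijective_iff_injective_and_card _).2 ⟨hinj, by simp⟩), hcp⟩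

lemma isRootOf_simple {I : Finset (Fin ℓ)} {i : Fin ℓ} (hi : i ∈ I) :
    R.IsRootOf I (R.simple i) := by
  refine ⟨R.simple_mem i, Pi.single i 1, fun j hj => ?_, ?_⟩
  · rcases eq_or_ne j i with rfl | h
    · exact hi
    · simp [h] at hj
  · rw [Finset.sum_eq_single i] <;> simp +contextual

lemma IsRootOf.mono {R : RootSystemData ℓ E} {I J : Finset (Fin ℓ)} (h : J ⊆ I) {β : E}
    (hβ : R.IsRootOf J β) : R.IsRootOf I β :=
  ⟨hβ.1, hβ.2.imp fun _ hc => ⟨fun i hi => h (hc.1 i hi), hc.2⟩⟩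

end RootSystemData

variable {ℓ : ℕ}

/-- For irreducible subsets `I`, `J` of the index set, neither of type A,
`J ⊆ I` if and only if `θ_J ≤ θ_I` in the dominant order. -/
theorem statement3 (R : RootSystemData ℓ E) (I J : Finset (Fin ℓ))
    (hI : R.Connected I) (hJ : R.Connected J)
    (hIA : ¬ R.IsTypeASub I) (hJA : ¬ R.IsTypeASub J)
    (θI θJ : E) (hθI : R.IsHighestShortRoot I θI)
    (hθJ : R.IsHighestShortRoot J θJ) :
    J ⊆ I ↔ R.wle θJ θI := by
  obtain ⟨cI, hcI, rfl⟩ := hθI.exists_coord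
  obtain ⟨cJ, hcJ, rfl⟩ := hθJ.exists_coord
  constructor
  · intro hJI
    rcases le_or_gt ⟪R.comb (fun i => (cJ i : ℝ)), R.comb (fun i => (cJ i : ℝ))⟫
      ⟪R.comb (fun i => (cI i : ℝ)), R.comb (fun i => (cI i : ℝ))⟫ with hle | hlt
    · exact hθI.2 _ ⟨hθJ.1.1.mono hJI, fun γ hγ => hle.trans (hθI.1.2 γ hγ)⟩
    · obtain ⟨k, hk, hk'⟩ := R.exists_simple_inner_self_eq _ cI rfl hθI.1.1.1
      refine absurd (R.isTypeASub_of_lt hI hJ hJI (hcI k hk) fun j hj => ?_) hJA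
      rw [hk']
      exact hlt.trans_le (hθJ.1.2 _ (R.isRootOf_simple hj))
  · rintro ⟨d, hd⟩ j hj
    have hJj := hθJ.coord_ne_zero hJ hcJ hj
    refine hcI j fun h0 => hJj ?_
    rw [← R.comb_apply (fun i => (d i : ℝ)), ← map_sub] at hd
    have := congrFun (R.comb_injective hd) j
    simp only [Pi.sub_apply, h0, Nat.cast_zero, zero_sub] at this
    have h1 : (0 : ℝ) ≤ d j := Nat.cast_nonneg _
    have h2 : (0 : ℝ) ≤ cJ j := Nat.cast_nonneg _
    exact_mod_cast (by linarith : (cJ j : ℝ) = 0)
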